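/- Suppose every edge weight is nonzero, and let r be the number of vertices of the weighted digraph whose out-degree is at least 1. Then the dimension of the null space of the weighted edge Laplacian is at least m − r: finrank of the kernel of the linear map x ↦ Le.mulVec x on ℝ^m is ≥ m − r. -/

import Mathlib

open Matrix

/-- If every edge weight is nonzero and `r` is the number of vertices
with out-degree at least 1, then the dimension of the null space of the weighted
edge Laplacian `Le = Eᵀ * A * W` is at least `m - r`. -/
theorem edgeLaplacian_kernel_dim_ge
    (n m : ℕ) (hn : 2 ≤ n) (hm : 1 ≤ m)
    (tail head : Fin m → Fin n) (hth : ∀ e, tail e ≠ head e)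
    (w : Fin m → ℝ) (hw : ∀ e, w e ≠ 0)
    (E : Matrix (Fin n) (Fin m) ℝ)
    (hE : ∀ v e, E v e = if v = tail e then 1 else if v = head e then -1 else 0)
    (A : Matrix (Fin n) (Fin m) ℝ)
    (hA : ∀ v e, A v e = if v = tail e then 1 else 0)
    (W : Matrix (Fin m) (Fin m) ℝ) (hW : W = Matrix.diagonal w)
    (Le : Matrix (Fin m) (Fin m) ℝ) (hLe : Le = Eᵀ * A * W)
    (r : ℕ)
    (hr : r = (Finset.univ.filter
      (fun v : Fin n => 1 ≤ (Finset.univ.filter (fun e => tail e = v)).card)).card) :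
    m - r ≤ Module.finrank ℝ ↥(LinearMap.ker Le.mulVecLin) := by
  classical
  set S := Finset.univ.filter
      (fun v : Fin n => 1 ≤ (Finset.univ.filter (fun e => tail e = v)).card) with hS
  have hmem : ∀ e, tail e ∈ S := by
    intro e
    rw [hS, Finset.mem_filter]
    refine ⟨Finset.mem_univ _, Finset.card_pos.mpr ⟨e, ?_⟩⟩
    simp
  have hfac : Eᵀ * A = (Matrix.of fun (e : Fin m) (s : S) => E s e) *
      (Matrix.of fun (s : S) (e : Fin m) => A s e) := by
    ext i j
    simp only [Matrix.mul_apply, Matrix.transpose_apply, Matrix.of_apply]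
    rw [Finset.sum_coe_sort S (fun v => E v i * A v j)]
    symm
    apply Finset.sum_subset (Finset.subset_univ _)
    intro v _ hv
    have : v ≠ tail j := fun h => hv (h ▸ hmem j)
    simp [hA, this]
  have hrank : Le.rank ≤ r := by
    rw [hLe, hfac, hr]
    refine (Matrix.rank_mul_le_left _ _).trans ((Matrix.rank_mul_le_right _ _).trans ?_)
    refine (Matrix.rank_le_card_height _).trans ?_
    simp
  have h := LinearMap.finrank_range_add_finrank_ker Le.mulVecLin
  rw [Module.finrank_fin_fun] at h
  unfold Matrix.rank at hrank
  omega
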